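/- There exists a constant C > 0 depending only on Ω, a, b and c such that for every mesh, the finite element solution satisfies ‖u_h'‖_Ω ≤ C ‖f‖_Ω. Moreover, for every constant C₁ > 0 there exists a constant C > 0 depending only on Ω, a, b, c and C₁ such that if u ∈ H²(Ω) and the mesh satisfies max_i h_i ≤ C₁/N, then ‖(u − u_h)'‖_Ω ≤ C ‖r‖_Ω / N, where r = f + a' u' − b u' − c u. -/

import Mathlib

/-!
Setting of Huang–He, "Error analysis for equidistributing meshes":
the boundary value problem  −(a u')' + b u' + c u = f on Ω = (0,1), u(0)=u(1)=0,
its linear finite element discretization on a mesh 0 = x₀ < ⋯ < x_N = 1,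
and the residual-based equidistribution quantities.
-/

noncomputable section
open MeasureTheory Real

namespace EquidMesh

/-- L² norm on (0,1). -/
def L2 (g : ℝ → ℝ) : ℝ := Real.sqrt (∫ t in (0:ℝ)..1, (g t)^2)

/-- L¹ norm on (0,1). -/
def L1 (g : ℝ → ℝ) : ℝ := ∫ t in (0:ℝ)..1, |g t|

/-- The L^{2/3} quasi-norm on (0,1): (∫₀¹ |g|^{2/3})^{3/2}. -/
def Lp23 (g : ℝ → ℝ) : ℝ := (∫ t in (0:ℝ)..1, |g t| ^ ((2:ℝ)/3)) ^ ((3:ℝ)/2)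

/-- L^∞ norm (essential supremum of |g|) on (0,1). -/
def Linf (g : ℝ → ℝ) : ℝ := essSup (fun t => |g t|) (volume.restrict (Set.Ioo (0:ℝ) 1))

/-- Membership in L²(0,1). -/
def MemL2 (g : ℝ → ℝ) : Prop :=
  Measurable g ∧ IntervalIntegrable (fun t => (g t)^2) volume 0 1

/-- Membership in L^∞(0,1). -/
def MemLinf (g : ℝ → ℝ) : Prop :=
  Measurable g ∧ ∃ M : ℝ, ∀ᵐ x ∂(volume.restrict (Set.Ioo (0:ℝ) 1)), |g x| ≤ M

/-- `g` is absolutely continuous on [0,1] with derivative `g' ∈ L¹(0,1)`. -/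
def HasL1Deriv (g g' : ℝ → ℝ) : Prop :=
  Measurable g' ∧ IntervalIntegrable g' volume 0 1 ∧
    ∀ x ∈ Set.Icc (0:ℝ) 1, g x = g 0 + ∫ t in (0:ℝ)..x, g' t

/-- A function in H¹(0,1): absolutely continuous on [0,1], carried together with its
(a.e.) derivative, which lies in L²(0,1). -/
structure H1 where
  val : ℝ → ℝ
  dval : ℝ → ℝ
  dval_meas : Measurable dval
  dval_int : IntervalIntegrable dval volume 0 1
  dval_sq_int : IntervalIntegrable (fun t => (dval t)^2) volume 0 1
  ftc : ∀ x ∈ Set.Icc (0:ℝ) 1, val x = val 0 + ∫ t in (0:ℝ)..x, dval t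

/-- `u ∈ H²(0,1)`: the derivative `u'` is absolutely continuous with `u'' ∈ L²(0,1)`. -/
def H1.IsH2 (u : H1) : Prop :=
  ∃ u'' : ℝ → ℝ, Measurable u'' ∧ IntervalIntegrable u'' volume 0 1 ∧
    IntervalIntegrable (fun t => (u'' t)^2) volume 0 1 ∧
    ∀ x ∈ Set.Icc (0:ℝ) 1, u.dval x = u.dval 0 + ∫ t in (0:ℝ)..x, u'' t

/-- The coefficients of the elliptic problem on Ω = (0,1):
`a, b ∈ W^{1,∞}(Ω)`, `c ∈ L^∞(Ω)`, `a ≥ a₀ > 0`, and `c − b'/2 ≥ 0` a.e. -/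
structure Coeffs where
  a : ℝ → ℝ
  b : ℝ → ℝ
  c : ℝ → ℝ
  a' : ℝ → ℝ
  b' : ℝ → ℝ
  a0 : ℝ
  a0_pos : 0 < a0
  a_lb : ∀ x ∈ Set.Icc (0:ℝ) 1, a0 ≤ a x
  a'_meas : Measurable a'
  b'_meas : Measurable b'
  c_meas : Measurable c
  a'_int : IntervalIntegrable a' volume 0 1
  b'_int : IntervalIntegrable b' volume 0 1
  a'_bdd : ∃ M : ℝ, ∀ᵐ x ∂(volume.restrict (Set.Ioo (0:ℝ) 1)), |a' x| ≤ M
  b'_bdd : ∃ M : ℝ, ∀ᵐ x ∂(volume.restrict (Set.Ioo (0:ℝ) 1)), |b' x| ≤ M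
  c_bdd : ∃ M : ℝ, ∀ᵐ x ∂(volume.restrict (Set.Ioo (0:ℝ) 1)), |c x| ≤ M
  ftc_a : ∀ x ∈ Set.Icc (0:ℝ) 1, a x = a 0 + ∫ t in (0:ℝ)..x, a' t
  ftc_b : ∀ x ∈ Set.Icc (0:ℝ) 1, b x = b 0 + ∫ t in (0:ℝ)..x, b' t
  cb_nonneg : ∀ᵐ x ∂(volume.restrict (Set.Ioo (0:ℝ) 1)), 0 ≤ c x - b' x / 2

/-- The bilinear form B(u,v) = ∫₀¹ (a u' v' + b u' v + c u v) dx. -/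
def Coeffs.B (P : Coeffs) (u v : H1) : ℝ :=
  ∫ t in (0:ℝ)..1,
    (P.a t * u.dval t * v.dval t + P.b t * u.dval t * v.val t + P.c t * u.val t * v.val t)

/-- The right-hand side functional (f, v) = ∫₀¹ f v dx. -/
def ip (f : ℝ → ℝ) (v : H1) : ℝ := ∫ t in (0:ℝ)..1, f t * v.val t

/-- `u ∈ H¹₀(Ω)` is the weak solution: B(u,v) = (f,v) for all v ∈ H¹₀(Ω). -/
def Coeffs.IsWeakSolution (P : Coeffs) (f : ℝ → ℝ) (u : H1) : Prop :=
  u.val 0 = 0 ∧ u.val 1 = 0 ∧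
    ∀ v : H1, v.val 0 = 0 → v.val 1 = 0 → P.B u v = ip f v

/-- A mesh of N elements of Ω = (0,1): 0 = x₀ < x₁ < ⋯ < x_N = 1. -/
structure Mesh (N : ℕ) where
  x : ℕ → ℝ
  x_zero : x 0 = 0
  x_last : x N = 1
  x_mono : ∀ i < N, x i < x (i+1)

/-- Element length (the element of index `i` is `(x i, x (i+1))`, `0 ≤ i < N`). -/
def Mesh.h {N : ℕ} (m : Mesh N) (i : ℕ) : ℝ := m.x (i+1) - m.x i

/-- `v` is piecewise linear with respect to the mesh: its derivative is constant
inside each element. -/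
def Mesh.IsPL {N : ℕ} (m : Mesh N) (v : H1) : Prop :=
  ∀ i < N, ∃ s : ℝ, ∀ t ∈ Set.Ioo (m.x i) (m.x (i+1)), v.dval t = s

/-- `uh` is the linear finite element solution on the mesh `m`:
a continuous piecewise linear function vanishing at 0 and 1 with
B(u_h, v_h) = (f, v_h) for all piecewise linear v_h vanishing at 0 and 1. -/
def Coeffs.IsFESolution (P : Coeffs) (f : ℝ → ℝ) {N : ℕ} (m : Mesh N) (uh : H1) : Prop :=
  uh.val 0 = 0 ∧ uh.val 1 = 0 ∧ m.IsPL uh ∧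
    ∀ v : H1, v.val 0 = 0 → v.val 1 = 0 → m.IsPL v → P.B uh v = ip f v

/-- The residual of `w`: r = f + a' w' − b w' − c w. -/
def Coeffs.res (P : Coeffs) (f : ℝ → ℝ) (w : H1) : ℝ → ℝ :=
  fun t => f t + P.a' t * w.dval t - P.b t * w.dval t - P.c t * w.val t

/-- The element L² average ⟨g⟩_i = (h_i⁻¹ ∫_{K_i} g²)^{1/2}. -/
def Mesh.avg {N : ℕ} (m : Mesh N) (g : ℝ → ℝ) (i : ℕ) : ℝ :=
  Real.sqrt ((1 / m.h i) * ∫ t in (m.x i)..(m.x (i+1)), (g t)^2)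

/-- The intensity parameter α_h = (Σ_i h_i ⟨g⟩_i^{2/3})³. -/
def Mesh.alpha {N : ℕ} (m : Mesh N) (g : ℝ → ℝ) : ℝ :=
  (∑ i ∈ Finset.range N, m.h i * (m.avg g i) ^ ((2:ℝ)/3)) ^ 3

/-- The adaptation function value ρ_i = (1 + α_h⁻¹ ⟨g⟩_i²)^{1/3}. -/
def Mesh.rho {N : ℕ} (m : Mesh N) (g : ℝ → ℝ) (i : ℕ) : ℝ :=
  (1 + (m.alpha g)⁻¹ * (m.avg g i)^2) ^ ((1:ℝ)/3)

/-- σ_h = Σ_i ρ_i h_i. -/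
def Mesh.sigma {N : ℕ} (m : Mesh N) (g : ℝ → ℝ) : ℝ :=
  ∑ i ∈ Finset.range N, m.rho g i * m.h i

/-- The mesh equidistributes (the piecewise constant adaptation function built from) `g`:
ρ_i h_i = σ_h / N for all elements. -/
def Mesh.IsEquidistributing {N : ℕ} (m : Mesh N) (g : ℝ → ℝ) : Prop :=
  ∀ i < N, m.rho g i * m.h i = m.sigma g / (N:ℝ)

/-- Membership in the mesh set S_N: 1/(ρ₀ N) ≤ h_i ≤ 2/N for all i. -/
def Mesh.InS {N : ℕ} (m : Mesh N) (ρ0 : ℝ) : Prop :=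
  ∀ i < N, 1 / (ρ0 * (N:ℝ)) ≤ m.h i ∧ m.h i ≤ 2 / (N:ℝ)

/-- The maximum norm distance ‖X − X̃‖_∞ between two meshes with the same N. -/
def meshDist {N : ℕ} (m m' : Mesh N) : ℝ :=
  (Finset.range (N+1)).sup' (Finset.nonempty_range_iff.mpr (Nat.succ_ne_zero N))
    (fun i => |m.x i - m'.x i|)

/-- The energy norm squared ‖v‖_E² = ∫₀¹ (a v'² + (c − b'/2) v²) dx. -/
def Coeffs.energySq (P : Coeffs) (v : H1) : ℝ :=
  ∫ t in (0:ℝ)..1, (P.a t * (v.dval t)^2 + (P.c t - P.b' t / 2) * (v.val t)^2)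


/-!
Integrating by parts, the convection term of `B(v, v)` becomes `-∫ b' v² / 2`, so `B(v, v)` is the
energy and dominates `a₀ ‖v'‖²`. Coercivity with the Cauchy–Schwarz and Poincaré inequalities gives
stability; with continuity and Galerkin orthogonality it shows that `u_h` is, up to a constant, the
best approximation of `u` in `V_h` (Céa). The du Bois-Reymond lemma turns the weak equation into
`(a u')' = b u' + c u - f` almost everywhere, whence `u'' = -r / a`. The nodal interpolant has as
slope on each element the mean of `u'`, so by the Poincaré–Wirtinger inequality its error is at
most `max_i h_i ‖u''‖ ≤ max_i h_i ‖r‖ / a₀`.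
-/

section LpNorm

variable {α : Type*} {mα : MeasurableSpace α} {μ : Measure α}

lemma lpNorm_two_sq {f : α → ℝ} (hf : AEStronglyMeasurable f μ) :
    lpNorm f 2 μ ^ 2 = ∫ x, f x ^ 2 ∂μ := by
  rw [lpNorm_eq_integral_norm_rpow_toReal two_ne_zero ENNReal.ofNat_ne_top hf,
    ENNReal.toReal_ofNat, ← Nat.cast_ofNat (n := 2),
    Real.rpow_inv_natCast_pow (by positivity) two_ne_zero]
  simp

lemma lpNorm_mul_le {f g : α → ℝ} {p q r : ENNReal} [p.HolderTriple q r] (hf : MemLp f p μ)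
    (hg : MemLp g q μ) : lpNorm (fun x => f x * g x) r μ ≤ lpNorm f p μ * lpNorm g q μ := by
  rw [← toReal_eLpNorm (hf.1.fun_mul hg.1), ← toReal_eLpNorm hf.1, ← toReal_eLpNorm hg.1,
    ← ENNReal.toReal_mul]
  exact ENNReal.toReal_mono (ENNReal.mul_ne_top hf.eLpNorm_ne_top hg.eLpNorm_ne_top)
    (eLpNorm_smul_le_mul_eLpNorm (φ := f) (f := g) hg.1 hf.1)

lemma abs_integral_mul_le {f g : α → ℝ} {p q : ENNReal} [p.HolderTriple q 1] (hf : MemLp f p μ)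
    (hg : MemLp g q μ) : |∫ x, f x * g x ∂μ| ≤ lpNorm f p μ * lpNorm g q μ :=
  calc |∫ x, f x * g x ∂μ| ≤ ∫ x, |f x * g x| ∂μ := abs_integral_le_integral_abs
    _ = lpNorm (fun x => f x * g x) 1 μ := (lpNorm_one_eq_integral_norm (hf.1.mul hg.1)).symm
    _ ≤ lpNorm f p μ * lpNorm g q μ := lpNorm_mul_le hf hg

lemma sq_integral_le [IsFiniteMeasure μ] {f : α → ℝ} (hf : MemLp f 2 μ) :
    (∫ x, f x ∂μ) ^ 2 ≤ μ.real Set.univ * ∫ x, f x ^ 2 ∂μ := by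
  have hone : MemLp (fun _ : α => (1 : ℝ)) 2 μ := memLp_const 1
  have cauchySchwarz := abs_integral_mul_le hone hf
  simp only [one_mul] at cauchySchwarz
  calc (∫ x, f x ∂μ) ^ 2 ≤ (lpNorm (fun _ : α => (1 : ℝ)) 2 μ * lpNorm f 2 μ) ^ 2 :=
        sq_le_sq.2 (cauchySchwarz.trans (le_abs_self _))
    _ = μ.real Set.univ * ∫ x, f x ^ 2 ∂μ := by
        rw [mul_pow, lpNorm_two_sq hone.1, lpNorm_two_sq hf.1]
        simp

lemma memLp_top_of_continuousOn [TopologicalSpace α] [OpensMeasurableSpace α] {f : α → ℝ}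
    {s : Set α} (hs : IsCompact s) (hsm : MeasurableSet s) (hf : ContinuousOn f s) :
    MemLp f ⊤ (μ.restrict s) := by
  obtain ⟨M, hM⟩ := hs.exists_bound_of_continuousOn hf
  refine memLp_top_of_bound (hf.aestronglyMeasurable_of_isCompact hs hsm) M ?_
  filter_upwards [ae_restrict_mem hsm] with x hx using hM x hx

lemma integrable_mul_mul {k f g : α → ℝ} (hk : MemLp k ⊤ μ) (hf : MemLp f 2 μ)
    (hg : MemLp g 2 μ) : Integrable (fun x => k x * f x * g x) μ :=
  (hf.mul hk (r := 2)).integrable_mul hg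

lemma lpNorm_le_mul_lpNorm_of_ae_le_mul {f g : α → ℝ} {p : ENNReal} {K : ℝ} (hK : 0 ≤ K)
    (hf : AEStronglyMeasurable f μ) (hg : MemLp g p μ) (hfg : ∀ᵐ x ∂μ, ‖f x‖ ≤ K * ‖g x‖) :
    lpNorm f p μ ≤ K * lpNorm g p μ := by
  rw [← toReal_eLpNorm hf, ← toReal_eLpNorm hg.1, ← ENNReal.toReal_ofReal hK, ← ENNReal.toReal_mul]
  exact ENNReal.toReal_mono (ENNReal.mul_ne_top ENNReal.ofReal_ne_top hg.eLpNorm_ne_top)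
    (eLpNorm_le_mul_eLpNorm_of_ae_le_mul hfg p)

end LpNorm

section AbsolutelyContinuous

lemma absolutelyContinuousOnInterval_of_dist_le {X Y : Type*} [PseudoMetricSpace X]
    [PseudoMetricSpace Y] {f : ℝ → X} {g : ℝ → Y} {a b K : ℝ} (hK : 0 < K)
    (hf : AbsolutelyContinuousOnInterval f a b)
    (hgf : ∀ x ∈ Set.uIcc a b, ∀ y ∈ Set.uIcc a b, dist (g x) (g y) ≤ K * dist (f x) (f y)) :
    AbsolutelyContinuousOnInterval g a b := by
  rw [absolutelyContinuousOnInterval_iff] at hf ⊢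
  intro ε hε
  obtain ⟨δ, hδ, hfδ⟩ := hf (ε / K) (by positivity)
  refine ⟨δ, hδ, fun E hE hlength => ?_⟩
  calc ∑ i ∈ Finset.range E.1, dist (g (E.2 i).1) (g (E.2 i).2)
      ≤ ∑ i ∈ Finset.range E.1, K * dist (f (E.2 i).1) (f (E.2 i).2) :=
        Finset.sum_le_sum fun i hi => hgf _ (hE.1 i hi).1 _ (hE.1 i hi).2
    _ = K * ∑ i ∈ Finset.range E.1, dist (f (E.2 i).1) (f (E.2 i).2) := (Finset.mul_sum ..).symm
    _ < K * (ε / K) := by gcongr; exact hfδ E hE hlength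
    _ = ε := mul_div_cancel₀ ε hK.ne'

lemma absolutelyContinuousOnInterval_inv {f : ℝ → ℝ} {a b : ℝ}
    (hf : AbsolutelyContinuousOnInterval f a b) (hf0 : ∀ x ∈ Set.uIcc a b, f x ≠ 0) :
    AbsolutelyContinuousOnInterval (fun x => (f x)⁻¹) a b := by
  obtain ⟨M, hM⟩ : ∃ M, ∀ x ∈ Set.uIcc a b, ‖(f x)⁻¹‖ ≤ M :=
    isCompact_uIcc.exists_bound_of_continuousOn (hf.continuousOn.inv₀ hf0)
  refine absolutelyContinuousOnInterval_of_dist_le (K := M ^ 2 + 1) (by positivity) hf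
    fun x hx y hy => ?_
  have hprod : ‖(f x)⁻¹‖ * ‖(f y)⁻¹‖ ≤ M ^ 2 + 1 := by
    nlinarith [mul_le_mul (hM x hx) (hM y hy) (norm_nonneg _) ((norm_nonneg _).trans (hM x hx))]
  calc dist (f x)⁻¹ (f y)⁻¹ = ‖(f x)⁻¹‖ * ‖(f y)⁻¹‖ * dist (f x) (f y) := by
        rw [dist_inv_inv₀ (hf0 x hx) (hf0 y hy), norm_inv, norm_inv]
        ring
    _ ≤ (M ^ 2 + 1) * dist (f x) (f y) := by gcongr

/-- `g` is absolutely continuous on the interval with endpoints `a` and `b`, and `g'` is its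
derivative almost everywhere there. Unlike `HasL1Deriv`, this form passes directly to products,
quotients and subintervals. -/
structure HasACDeriv (g g' : ℝ → ℝ) (a b : ℝ) : Prop where
  ac : AbsolutelyContinuousOnInterval g a b
  ae_hasDerivAt : ∀ᵐ x ∂volume.restrict (Set.uIoc a b), HasDerivAt g (g' x) x

namespace HasACDeriv

variable {f f' g g' : ℝ → ℝ} {a b : ℝ}

lemma of_eq_add_integral (hg' : IntervalIntegrable g' volume a b)
    (hg : ∀ x ∈ Set.uIcc a b, g x = g a + ∫ t in a..x, g' t) : HasACDeriv g g' a b where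
  ac := by
    refine absolutelyContinuousOnInterval_of_dist_le one_pos
      (hg'.absolutelyContinuousOnInterval_intervalIntegral Set.left_mem_uIcc) fun x hx y hy => ?_
    rw [hg x hx, hg y hy, dist_add_left, one_mul]
  ae_hasDerivAt := by
    have interior : ∀ᵐ x ∂volume.restrict (Set.uIoc a b), x ∈ Set.Ioo (min a b) (max a b) := by
      rw [Set.uIoc, ← restrict_Ioo_eq_restrict_Ioc]
      exact ae_restrict_mem measurableSet_Ioo
    filter_upwards [ae_restrict_of_ae hg'.ae_hasDerivAt_integral, interior] with x hderiv hx
    refine ((hderiv (Set.Ioo_subset_Icc_self hx) a Set.left_mem_uIcc).const_add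
      (g a)).congr_of_eventuallyEq ?_
    filter_upwards [Ioo_mem_nhds hx.1 hx.2] with y hy using hg y (Set.Ioo_subset_Icc_self hy)

lemma congr_ae {h' : ℝ → ℝ} (hg : HasACDeriv g g' a b)
    (h : g' =ᵐ[volume.restrict (Set.uIoc a b)] h') : HasACDeriv g h' a b where
  ac := hg.ac
  ae_hasDerivAt := by
    filter_upwards [hg.ae_hasDerivAt, h] with x hderiv hx using hx ▸ hderiv

lemma mono {c d : ℝ} (hg : HasACDeriv g g' a b) (hcd : Set.uIcc c d ⊆ Set.uIcc a b) :
    HasACDeriv g g' c d where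
  ac := hg.ac.mono hcd
  ae_hasDerivAt := ae_restrict_of_ae_restrict_of_subset
    (Set.uIoc_subset_uIoc_of_uIcc_subset_uIcc hcd) hg.ae_hasDerivAt

lemma mul (hf : HasACDeriv f f' a b) (hg : HasACDeriv g g' a b) :
    HasACDeriv (fun t => f t * g t) (fun t => f' t * g t + f t * g' t) a b where
  ac := hf.ac.mul hg.ac
  ae_hasDerivAt := by
    filter_upwards [hf.ae_hasDerivAt, hg.ae_hasDerivAt] with x hfx hgx using hfx.mul hgx

lemma div (hf : HasACDeriv f f' a b) (hg : HasACDeriv g g' a b)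
    (hg0 : ∀ x ∈ Set.uIcc a b, g x ≠ 0) :
    HasACDeriv (fun t => f t / g t) (fun t => (f' t * g t - f t * g' t) / g t ^ 2) a b where
  ac := by
    simpa only [div_eq_mul_inv] using! hf.ac.mul (absolutelyContinuousOnInterval_inv hg.ac hg0)
  ae_hasDerivAt := by
    filter_upwards [hf.ae_hasDerivAt, hg.ae_hasDerivAt, ae_restrict_mem measurableSet_uIoc]
      with x hfx hgx hx using hfx.div hgx (hg0 x (Set.uIoc_subset_uIcc hx))

lemma const_add (hg : HasACDeriv g g' a b) (k : ℝ) : HasACDeriv (fun t => k + g t) g' a b where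
  ac := absolutelyContinuousOnInterval_of_dist_le one_pos hg.ac fun x _ y _ => by
    rw [dist_add_left, one_mul]
  ae_hasDerivAt := by filter_upwards [hg.ae_hasDerivAt] with x hx using hx.const_add k

lemma integral_eq_sub (hg : HasACDeriv g g' a b) : ∫ t in a..b, g' t = g b - g a := by
  rw [← hg.ac.integral_deriv_eq_sub]
  refine intervalIntegral.integral_congr_ae_restrict ?_
  filter_upwards [hg.ae_hasDerivAt] with x hx using hx.deriv.symm

lemma memLp_top (hg : HasACDeriv g g' a b) : MemLp g ⊤ (volume.restrict (Set.uIoc a b)) :=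
  (memLp_top_of_continuousOn isCompact_uIcc measurableSet_uIcc hg.ac.continuousOn).mono_measure
    (Measure.restrict_mono Set.uIoc_subset_uIcc le_rfl)

lemma sq_sub_le (hab : a ≤ b) (hg : HasACDeriv g g' a b)
    (hg' : MemLp g' 2 (volume.restrict (Set.uIoc a b))) {x y : ℝ} (hx : x ∈ Set.Icc a b)
    (hy : y ∈ Set.Icc a b) : (g y - g x) ^ 2 ≤ (b - a) * ∫ t in a..b, g' t ^ 2 := by
  rw [← Set.uIcc_of_le hab] at hx hy
  rw [Set.uIoc_of_le hab] at hg'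
  have hsub : Set.uIcc x y ⊆ Set.uIcc a b := Set.uIcc_subset_uIcc hx hy
  have hint : IntervalIntegrable g' volume a b :=
    (intervalIntegrable_iff_integrableOn_Ioc_of_le hab).2 (hg'.integrable one_le_two)
  have abs_sub_le : |g y - g x| ≤ |(∫ t in a..b, |g' t|)| :=
    calc |g y - g x| = |∫ t in x..y, g' t| := by rw [(hg.mono hsub).integral_eq_sub]
      _ ≤ |(∫ t in x..y, |g' t|)| :=
        intervalIntegral.norm_integral_le_abs_integral_norm (f := g') (μ := volume)
      _ ≤ |(∫ t in a..b, |g' t|)| := intervalIntegral.abs_integral_mono_interval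
          (Set.uIoc_subset_uIoc_of_uIcc_subset_uIcc hsub) (.of_forall fun _ => abs_nonneg _)
          hint.abs
  calc (g y - g x) ^ 2 ≤ (∫ t in a..b, |g' t|) ^ 2 := sq_le_sq.2 abs_sub_le
    _ ≤ (b - a) * ∫ t in a..b, g' t ^ 2 := by
        rw [intervalIntegral.integral_of_le hab, intervalIntegral.integral_of_le hab]
        simpa [hab] using sq_integral_le hg'.abs

lemma integral_sq_sub_average_le (hab : a < b) (hg : HasACDeriv g g' a b)
    (hg' : MemLp g' 2 (volume.restrict (Set.uIoc a b))) :
    ∫ t in a..b, (g t - ⨍ r in a..b, g r) ^ 2 ≤ (b - a) ^ 2 * ∫ t in a..b, g' t ^ 2 := by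
  have hcont : ContinuousOn g (Set.uIcc a b) := hg.ac.continuousOn
  obtain ⟨c, hc, hmean⟩ := exists_eq_interval_average hab.ne hcont
  rw [Set.uIoo_of_le hab.le] at hc
  rw [← hmean]
  calc ∫ t in a..b, (g t - g c) ^ 2
      ≤ ∫ _ in a..b, (b - a) * ∫ t in a..b, g' t ^ 2 :=
        intervalIntegral.integral_mono_on hab.le
          ((hcont.sub continuousOn_const).pow 2).intervalIntegrable intervalIntegrable_const
          fun t ht => hg.sq_sub_le hab.le hg' (Set.Ioo_subset_Icc_self hc) ht
    _ = (b - a) ^ 2 * ∫ t in a..b, g' t ^ 2 := by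
        rw [intervalIntegral.integral_const, smul_eq_mul]
        ring

end HasACDeriv

end AbsolutelyContinuous

section UnitInterval

/-- Lebesgue measure on the unit interval, in the form in which interval integrals and
`HasACDeriv` refer to it. -/
abbrev unitMeasure : Measure ℝ := volume.restrict (Set.uIoc (0 : ℝ) 1)

lemma integral_eq_unitMeasure (g : ℝ → ℝ) : ∫ t in (0 : ℝ)..1, g t = ∫ t, g t ∂unitMeasure := by
  rw [intervalIntegral.integral_of_le zero_le_one, unitMeasure, Set.uIoc_of_le zero_le_one]

lemma restrict_Ioo_eq_unitMeasure : volume.restrict (Set.Ioo (0 : ℝ) 1) = unitMeasure := by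
  rw [restrict_Ioo_eq_restrict_Ioc, unitMeasure, Set.uIoc_of_le zero_le_one]

lemma ae_unitMeasure_mem_Icc : ∀ᵐ t ∂unitMeasure, t ∈ Set.Icc (0 : ℝ) 1 := by
  filter_upwards [ae_restrict_mem measurableSet_uIoc] with t ht
  exact Set.uIcc_of_le (zero_le_one' ℝ) ▸ Set.uIoc_subset_uIcc ht

instance : IsProbabilityMeasure unitMeasure := ⟨by simp⟩

lemma MemL2.memLp {g : ℝ → ℝ} (hg : MemL2 g) : MemLp g 2 unitMeasure :=
  (memLp_two_iff_integrable_sq hg.1.aestronglyMeasurable).2 (intervalIntegrable_iff.1 hg.2)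

lemma MemLinf.memLp {g : ℝ → ℝ} (hg : MemLinf g) : MemLp g ⊤ unitMeasure := by
  obtain ⟨hmeas, M, hM⟩ := hg
  rw [restrict_Ioo_eq_unitMeasure] at hM
  exact memLp_top_of_bound hmeas.aestronglyMeasurable M hM

lemma L2_nonneg (g : ℝ → ℝ) : 0 ≤ L2 g := Real.sqrt_nonneg _

lemma L2_sq (g : ℝ → ℝ) : L2 g ^ 2 = ∫ t, g t ^ 2 ∂unitMeasure := by
  rw [L2, integral_eq_unitMeasure, Real.sq_sqrt (by positivity)]

lemma L2_eq_lpNorm {g : ℝ → ℝ} (hg : AEStronglyMeasurable g unitMeasure) :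
    L2 g = lpNorm g 2 unitMeasure := by
  rw [← sq_eq_sq₀ (L2_nonneg g) lpNorm_nonneg, L2_sq, lpNorm_two_sq hg]

lemma abs_integral_mul_mul_le {k f g : ℝ → ℝ} (hk : MemLp k ⊤ unitMeasure)
    (hf : MemLp f 2 unitMeasure) (hg : MemLp g 2 unitMeasure) :
    |∫ t, k t * f t * g t ∂unitMeasure| ≤ lpNorm k ⊤ unitMeasure * (L2 f * L2 g) := by
  rw [L2_eq_lpNorm hf.1, L2_eq_lpNorm hg.1, ← mul_assoc]
  exact (abs_integral_mul_le (hf.mul hk (r := 2)) hg).trans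
    (mul_le_mul_of_nonneg_right (lpNorm_mul_le hk hf) lpNorm_nonneg)

end UnitInterval

namespace H1

lemma memL2_dval (v : H1) : MemL2 v.dval := ⟨v.dval_meas, v.dval_sq_int⟩

lemma memLp_dval (v : H1) : MemLp v.dval 2 unitMeasure := v.memL2_dval.memLp

lemma hasACDeriv (v : H1) : HasACDeriv v.val v.dval 0 1 :=
  .of_eq_add_integral v.dval_int (by simpa using v.ftc)

lemma memLp_val (v : H1) : MemLp v.val 2 unitMeasure := v.hasACDeriv.memLp_top.mono_exponent le_top

lemma L2_val_le (v : H1) (h0 : v.val 0 = 0) : L2 v.val ≤ L2 v.dval := by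
  rw [← sq_le_sq₀ (L2_nonneg _) (L2_nonneg _), L2_sq v.val]
  calc ∫ t, v.val t ^ 2 ∂unitMeasure ≤ ∫ _, L2 v.dval ^ 2 ∂unitMeasure := by
        refine integral_mono_ae v.memLp_val.integrable_sq (integrable_const _) ?_
        filter_upwards [ae_unitMeasure_mem_Icc] with x hx
        simpa [h0, L2_sq, integral_eq_unitMeasure] using v.hasACDeriv.sq_sub_le zero_le_one
          v.memLp_dval (Set.left_mem_Icc.2 zero_le_one) hx
    _ = L2 v.dval ^ 2 := by simp

instance : Sub H1 where
  sub u v :=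
    { val := fun t => u.val t - v.val t
      dval := fun t => u.dval t - v.dval t
      dval_meas := u.dval_meas.sub v.dval_meas
      dval_int := u.dval_int.sub v.dval_int
      dval_sq_int := intervalIntegrable_iff.2 (u.memLp_dval.sub v.memLp_dval).integrable_sq
      ftc := fun x hx => by
        have hsub : Set.uIcc 0 x ⊆ Set.uIcc (0 : ℝ) 1 :=
          Set.uIcc_subset_uIcc_left (by rwa [Set.uIcc_of_le zero_le_one])
        rw [u.ftc x hx, v.ftc x hx, intervalIntegral.integral_sub (u.dval_int.mono_set hsub)
          (v.dval_int.mono_set hsub)]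
        ring }

@[simp] lemma sub_val (u v : H1) (t : ℝ) : (u - v).val t = u.val t - v.val t := rfl

@[simp] lemma sub_dval (u v : H1) (t : ℝ) : (u - v).dval t = u.dval t - v.dval t := rfl

/-- The `H¹` function with derivative `g` and value `y` at `0`. -/
def ofDeriv (g : ℝ → ℝ) (hg : MemL2 g) (y : ℝ) : H1 where
  val x := y + ∫ t in (0 : ℝ)..x, g t
  dval := g
  dval_meas := hg.1
  dval_int := intervalIntegrable_iff.2 (hg.memLp.integrable one_le_two)
  dval_sq_int := hg.2
  ftc x _ := by simp

@[simp] lemma ofDeriv_val_zero (g : ℝ → ℝ) (hg : MemL2 g) (y : ℝ) : (ofDeriv g hg y).val 0 = y := by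
  simp [ofDeriv]

lemma integral_mul_dval {G F : ℝ → ℝ} (hG : HasACDeriv G F 0 1) (hF : MemLp F 2 unitMeasure)
    {v : H1} (h0 : v.val 0 = 0) (h1 : v.val 1 = 0) :
    ∫ t, G t * v.dval t ∂unitMeasure = -∫ t, F t * v.val t ∂unitMeasure := by
  have hFv : Integrable (fun t => F t * v.val t) unitMeasure := hF.integrable_mul v.memLp_val
  have hGLp : MemLp G 2 unitMeasure := hG.memLp_top.mono_exponent le_top
  have hGv : Integrable (fun t => G t * v.dval t) unitMeasure := hGLp.integrable_mul v.memLp_dval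
  have hprod := (hG.mul v.hasACDeriv).integral_eq_sub
  rw [integral_eq_unitMeasure, integral_add hFv hGv, h0, h1] at hprod
  linarith

/-- Testing with the antiderivative of `w` minus its mean `k` gives `∫ (w - k)² = 0`. -/
lemma ae_eq_const_of_integral_mul_dval_eq_zero {w : ℝ → ℝ} (hw : MemLp w 2 unitMeasure)
    (h : ∀ v : H1, v.val 0 = 0 → v.val 1 = 0 → ∫ t, w t * v.dval t ∂unitMeasure = 0) :
    ∃ k : ℝ, w =ᵐ[unitMeasure] fun _ => k := by
  set k := ∫ t, w t ∂unitMeasure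
  have deviation_memLp : MemLp (fun t => w t - k) 2 unitMeasure := hw.sub (memLp_const k)
  obtain ⟨g, hgm, hg⟩ := deviation_memLp.1.aemeasurable
  have hgL2 : MemL2 g := ⟨hgm, intervalIntegrable_iff.2
    ((memLp_congr_ae hg).1 deviation_memLp).integrable_sq⟩
  have integral_deviation : ∫ t, (w t - k) ∂unitMeasure = 0 := by
    rw [integral_sub (hw.integrable one_le_two) (integrable_const k)]
    simp [k]
  have integral_mul_deviation : ∫ t, w t * (w t - k) ∂unitMeasure = 0 := by
    rw [← h (ofDeriv g hgL2 0) (by simp)]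
    · exact integral_congr_ae (by filter_upwards [hg] with t ht using by rw [ht]; rfl)
    · change 0 + ∫ t in (0 : ℝ)..1, g t = 0
      rw [integral_eq_unitMeasure, ← integral_congr_ae hg, integral_deviation, add_zero]
  have integral_sq_deviation : ∫ t, (w t - k) ^ 2 ∂unitMeasure = 0 :=
    calc ∫ t, (w t - k) ^ 2 ∂unitMeasure
        = ∫ t, (w t * (w t - k) - k * (w t - k)) ∂unitMeasure := by congr 1 with t; ring
      _ = 0 := by
        rw [integral_sub (f := fun t => w t * (w t - k)) (hw.integrable_mul deviation_memLp)
          ((deviation_memLp.integrable one_le_two).const_mul k), integral_const_mul,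
          integral_mul_deviation, integral_deviation, mul_zero, sub_zero]
  refine ⟨k, ?_⟩
  filter_upwards [(integral_eq_zero_iff_of_nonneg (fun t => sq_nonneg (w t - k))
    deviation_memLp.integrable_sq).1 integral_sq_deviation] with t ht
  exact sub_eq_zero.1 (sq_eq_zero_iff.1 ht)

end H1

lemma abs_ip_le {f : ℝ → ℝ} (hf : MemLp f 2 unitMeasure) {v : H1} (h0 : v.val 0 = 0) :
    |ip f v| ≤ L2 f * L2 v.dval := by
  calc |ip f v| ≤ L2 f * L2 v.val := by
        rw [ip, integral_eq_unitMeasure, L2_eq_lpNorm hf.1, L2_eq_lpNorm v.memLp_val.1]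
        exact abs_integral_mul_le hf v.memLp_val
    _ ≤ L2 f * L2 v.dval := mul_le_mul_of_nonneg_left (v.L2_val_le h0) (L2_nonneg f)

namespace Coeffs

variable (P : Coeffs)

lemma hasACDeriv_a : HasACDeriv P.a P.a' 0 1 :=
  .of_eq_add_integral P.a'_int (by simpa using P.ftc_a)

lemma hasACDeriv_b : HasACDeriv P.b P.b' 0 1 :=
  .of_eq_add_integral P.b'_int (by simpa using P.ftc_b)

lemma memLp_a : MemLp P.a ⊤ unitMeasure := P.hasACDeriv_a.memLp_top

lemma memLp_b : MemLp P.b ⊤ unitMeasure := P.hasACDeriv_b.memLp_top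

lemma memLp_c : MemLp P.c ⊤ unitMeasure := MemLinf.memLp ⟨P.c_meas, P.c_bdd⟩

lemma memLp_a' : MemLp P.a' ⊤ unitMeasure := MemLinf.memLp ⟨P.a'_meas, P.a'_bdd⟩

lemma memLp_b' : MemLp P.b' ⊤ unitMeasure := MemLinf.memLp ⟨P.b'_meas, P.b'_bdd⟩

lemma ae_a0_le : ∀ᵐ t ∂unitMeasure, P.a0 ≤ P.a t := by
  filter_upwards [ae_unitMeasure_mem_Icc] with t ht using P.a_lb t ht

lemma integrable_diffusion (u v : H1) :
    Integrable (fun t => P.a t * u.dval t * v.dval t) unitMeasure :=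
  integrable_mul_mul P.memLp_a u.memLp_dval v.memLp_dval

lemma integrable_convection (u v : H1) :
    Integrable (fun t => P.b t * u.dval t * v.val t) unitMeasure :=
  integrable_mul_mul P.memLp_b u.memLp_dval v.memLp_val

lemma integrable_reaction (u v : H1) :
    Integrable (fun t => P.c t * u.val t * v.val t) unitMeasure :=
  integrable_mul_mul P.memLp_c u.memLp_val v.memLp_val

lemma integrable_B (u v : H1) : Integrable (fun t => P.a t * u.dval t * v.dval t +
    P.b t * u.dval t * v.val t + P.c t * u.val t * v.val t) unitMeasure :=
  ((P.integrable_diffusion u v).add (P.integrable_convection u v)).add (P.integrable_reaction u v)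

lemma integrable_energySq (v : H1) : Integrable
    (fun t => P.a t * v.dval t ^ 2 + (P.c t - P.b' t / 2) * v.val t ^ 2) unitMeasure := by
  have reaction := integrable_mul_mul (P.memLp_c.sub (P.memLp_b'.mul_const 2⁻¹)) v.memLp_val
    v.memLp_val
  refine ((P.integrable_diffusion v v).add reaction).congr (.of_forall fun t => ?_)
  simp only [Pi.add_apply, Pi.sub_apply]
  ring

lemma B_sub_left (u v w : H1) : P.B (u - v) w = P.B u w - P.B v w := by
  simp only [B, integral_eq_unitMeasure]
  rw [← integral_sub (P.integrable_B u w) (P.integrable_B v w)]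
  congr 1 with t
  simp only [H1.sub_val, H1.sub_dval]
  ring

lemma B_sub_right (u v w : H1) : P.B u (v - w) = P.B u v - P.B u w := by
  simp only [B, integral_eq_unitMeasure]
  rw [← integral_sub (P.integrable_B u v) (P.integrable_B u w)]
  congr 1 with t
  simp only [H1.sub_val, H1.sub_dval]
  ring

lemma B_self_eq_energySq_add (v : H1) :
    P.B v v = P.energySq v + (P.b 1 * v.val 1 ^ 2 - P.b 0 * v.val 0 ^ 2) / 2 := by
  have hprod := (P.hasACDeriv_b.mul v.hasACDeriv).mul v.hasACDeriv
  have integrable_prod_deriv : Integrable (fun t =>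
      (P.b' t * v.val t + P.b t * v.dval t) * v.val t + P.b t * v.val t * v.dval t)
      unitMeasure := by
    refine ((integrable_mul_mul P.memLp_b' v.memLp_val v.memLp_val).add
      ((P.integrable_convection v v).const_mul 2)).congr (.of_forall fun t => ?_)
    simp only [Pi.add_apply]
    ring
  calc P.B v v = ∫ t, ((P.a t * v.dval t ^ 2 + (P.c t - P.b' t / 2) * v.val t ^ 2) +
        ((P.b' t * v.val t + P.b t * v.dval t) * v.val t + P.b t * v.val t * v.dval t) / 2)
        ∂unitMeasure := by
        rw [B, integral_eq_unitMeasure]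
        congr 1 with t
        ring
    _ = P.energySq v + (P.b 1 * v.val 1 ^ 2 - P.b 0 * v.val 0 ^ 2) / 2 := by
        rw [integral_add (P.integrable_energySq v) (integrable_prod_deriv.div_const 2),
          integral_div, ← integral_eq_unitMeasure, ← integral_eq_unitMeasure,
          hprod.integral_eq_sub, energySq]
        ring

lemma a0_mul_sq_L2_dval_le_energySq (v : H1) : P.a0 * L2 v.dval ^ 2 ≤ P.energySq v := by
  have hcb := P.cb_nonneg
  rw [restrict_Ioo_eq_unitMeasure] at hcb
  rw [L2_sq, ← integral_const_mul, energySq, integral_eq_unitMeasure]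
  refine integral_mono_ae (v.memLp_dval.integrable_sq.const_mul _) (P.integrable_energySq v) ?_
  filter_upwards [hcb, P.ae_a0_le] with t hcb ha
  calc P.a0 * v.dval t ^ 2 ≤ P.a t * v.dval t ^ 2 := by gcongr
    _ ≤ P.a t * v.dval t ^ 2 + (P.c t - P.b' t / 2) * v.val t ^ 2 :=
        le_add_of_nonneg_right (mul_nonneg hcb (sq_nonneg _))

lemma coercive {v : H1} (h0 : v.val 0 = 0) (h1 : v.val 1 = 0) :
    P.a0 * L2 v.dval ^ 2 ≤ P.B v v := by
  simpa [B_self_eq_energySq_add, h0, h1] using P.a0_mul_sq_L2_dval_le_energySq v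

/-- The continuity constant `‖a‖_∞ + ‖b‖_∞ + ‖c‖_∞` of the bilinear form `B` with respect to the
norm `‖v'‖` on functions vanishing at `0`. -/
def continuityConst : ℝ :=
  lpNorm P.a ⊤ unitMeasure + lpNorm P.b ⊤ unitMeasure + lpNorm P.c ⊤ unitMeasure

lemma continuityConst_pos : 0 < P.continuityConst := by
  obtain ⟨t, ha, hnorm⟩ := (P.ae_a0_le.and (ae_le_lpNorm_exponent_top P.memLp_a)).exists
  have lpNorm_a_pos : 0 < lpNorm P.a ⊤ unitMeasure :=
    (P.a0_pos.trans_le ha).trans_le ((le_abs_self _).trans hnorm)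
  exact add_pos_of_pos_of_nonneg (add_pos_of_pos_of_nonneg lpNorm_a_pos lpNorm_nonneg) lpNorm_nonneg

lemma abs_B_le {u v : H1} (hu : u.val 0 = 0) (hv : v.val 0 = 0) :
    |P.B u v| ≤ P.continuityConst * (L2 u.dval * L2 v.dval) := by
  have diffusion_le := abs_integral_mul_mul_le P.memLp_a u.memLp_dval v.memLp_dval
  have convection_le : |∫ t, P.b t * u.dval t * v.val t ∂unitMeasure| ≤
      lpNorm P.b ⊤ unitMeasure * (L2 u.dval * L2 v.dval) :=
    (abs_integral_mul_mul_le P.memLp_b u.memLp_dval v.memLp_val).trans <| by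
      gcongr
      exacts [lpNorm_nonneg, L2_nonneg _, v.L2_val_le hv]
  have reaction_le : |∫ t, P.c t * u.val t * v.val t ∂unitMeasure| ≤
      lpNorm P.c ⊤ unitMeasure * (L2 u.dval * L2 v.dval) :=
    (abs_integral_mul_mul_le P.memLp_c u.memLp_val v.memLp_val).trans <| by
      gcongr
      exacts [lpNorm_nonneg, L2_nonneg _, L2_nonneg _, u.L2_val_le hu, v.L2_val_le hv]
  have hB : P.B u v = (∫ t, P.a t * u.dval t * v.dval t ∂unitMeasure) +
      (∫ t, P.b t * u.dval t * v.val t ∂unitMeasure) +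
      ∫ t, P.c t * u.val t * v.val t ∂unitMeasure := by
    rw [B, integral_eq_unitMeasure, integral_add ((P.integrable_diffusion u v).fun_add
      (P.integrable_convection u v)) (P.integrable_reaction u v),
      integral_add (P.integrable_diffusion u v) (P.integrable_convection u v)]
  rw [hB, continuityConst, add_mul, add_mul]
  exact (abs_add_three _ _ _).trans (add_le_add (add_le_add diffusion_le convection_le) reaction_le)

lemma memLp_res {f : ℝ → ℝ} (hf : MemLp f 2 unitMeasure) (u : H1) :
    MemLp (P.res f u) 2 unitMeasure :=
  ((hf.add (u.memLp_dval.mul P.memLp_a')).sub (u.memLp_dval.mul P.memLp_b)).sub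
    (u.memLp_val.mul P.memLp_c)

lemma ae_norm_neg_res_div_a_le (f : ℝ → ℝ) (u : H1) :
    ∀ᵐ t ∂unitMeasure, ‖-P.res f u t / P.a t‖ ≤ P.a0⁻¹ * ‖P.res f u t‖ := by
  have ha0 := P.a0_pos
  filter_upwards [P.ae_a0_le] with t ha
  rw [norm_div, norm_neg, div_eq_inv_mul]
  gcongr
  exact ha.trans (le_abs_self _)

lemma memLp_neg_res_div_a {f : ℝ → ℝ} (hf : MemLp f 2 unitMeasure) (u : H1) :
    MemLp (fun t => -P.res f u t / P.a t) 2 unitMeasure :=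
  (P.memLp_res hf u).of_le_mul
    ((P.memLp_res hf u).1.aemeasurable.neg.div P.memLp_a.1.aemeasurable).aestronglyMeasurable
    (P.ae_norm_neg_res_div_a_le f u)

lemma L2_neg_res_div_a_le {f : ℝ → ℝ} (hf : MemLp f 2 unitMeasure) (u : H1) :
    L2 (fun t => -P.res f u t / P.a t) ≤ P.a0⁻¹ * L2 (P.res f u) := by
  have hquot := (P.memLp_neg_res_div_a hf u).1
  rw [L2_eq_lpNorm hquot, L2_eq_lpNorm (P.memLp_res hf u).1]
  exact lpNorm_le_mul_lpNorm_of_ae_le_mul (inv_nonneg.2 P.a0_pos.le) hquot (P.memLp_res hf u)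
    (P.ae_norm_neg_res_div_a_le f u)

/-- The derivative `b u' + c u - f` which the differential equation prescribes for the flux
`a u'`. -/
def fluxDeriv (f : ℝ → ℝ) (u : H1) (t : ℝ) : ℝ :=
  P.b t * u.dval t + P.c t * u.val t - f t

lemma memLp_fluxDeriv {f : ℝ → ℝ} (hf : MemLp f 2 unitMeasure) (u : H1) :
    MemLp (P.fluxDeriv f u) 2 unitMeasure :=
  ((u.memLp_dval.mul P.memLp_b).add (u.memLp_val.mul P.memLp_c)).sub hf

namespace IsWeakSolution

variable {P} {f : ℝ → ℝ} {u v : H1}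

lemma integral_flux_mul_dval (hf : MemLp f 2 unitMeasure) (hu : P.IsWeakSolution f u)
    (h0 : v.val 0 = 0) (h1 : v.val 1 = 0) :
    ∫ t, P.a t * u.dval t * v.dval t ∂unitMeasure =
      -∫ t, P.fluxDeriv f u t * v.val t ∂unitMeasure := by
  have hfv : Integrable (fun t => f t * v.val t) unitMeasure := hf.integrable_mul v.memLp_val
  have hFv : Integrable (fun t => P.fluxDeriv f u t * v.val t) unitMeasure :=
    (P.memLp_fluxDeriv hf u).integrable_mul v.memLp_val
  have weak : P.B u v - ip f v = 0 := sub_eq_zero.2 (hu.2.2 v h0 h1)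
  rw [B, ip, integral_eq_unitMeasure, integral_eq_unitMeasure,
    ← integral_sub (P.integrable_B u v) hfv] at weak
  rw [eq_neg_iff_add_eq_zero, ← integral_add (P.integrable_diffusion u v) hFv, ← weak]
  congr 1 with t
  rw [fluxDeriv]
  ring

lemma exists_flux (hf : MemLp f 2 unitMeasure) (hu : P.IsWeakSolution f u) :
    ∃ q : ℝ → ℝ, HasACDeriv q (P.fluxDeriv f u) 0 1 ∧
      (fun t => P.a t * u.dval t) =ᵐ[unitMeasure] q := by
  have hF : MemLp (P.fluxDeriv f u) 2 unitMeasure := P.memLp_fluxDeriv hf u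
  set G : ℝ → ℝ := fun x => ∫ t in (0 : ℝ)..x, P.fluxDeriv f u t
  have hG : HasACDeriv G (P.fluxDeriv f u) 0 1 :=
    .of_eq_add_integral (intervalIntegrable_iff.2 (hF.integrable one_le_two)) (by simp [G])
  have hGLp : MemLp G 2 unitMeasure := hG.memLp_top.mono_exponent le_top
  obtain ⟨k, hk⟩ := H1.ae_eq_const_of_integral_mul_dval_eq_zero
    (w := fun t => P.a t * u.dval t - G t) ((u.memLp_dval.mul P.memLp_a).sub hGLp)
    fun v h0 h1 => by
      have hGv : Integrable (fun t => G t * v.dval t) unitMeasure :=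
        hGLp.integrable_mul v.memLp_dval
      simp only [sub_mul]
      rw [integral_sub (P.integrable_diffusion u v) hGv, integral_flux_mul_dval hf hu h0 h1,
        H1.integral_mul_dval hG hF h0 h1, sub_self]
  refine ⟨fun t => k + G t, hG.const_add k, ?_⟩
  filter_upwards [hk] with t ht using eq_add_of_sub_eq ht

/-- Differentiating `u' = q / a`, where `q` is the flux, turns the differential equation into
`u'' = -r / a`. -/
lemma exists_hasACDeriv (hf : MemLp f 2 unitMeasure) (hu : P.IsWeakSolution f u) :
    ∃ p : ℝ → ℝ, HasACDeriv p (fun t => -P.res f u t / P.a t) 0 1 ∧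
      u.dval =ᵐ[unitMeasure] p := by
  obtain ⟨q, hq, hflux⟩ := exists_flux hf hu
  have ha (x : ℝ) (hx : x ∈ Set.uIcc (0 : ℝ) 1) : P.a x ≠ 0 :=
    (P.a0_pos.trans_le (P.a_lb x (by simpa using hx))).ne'
  refine ⟨fun t => q t / P.a t, (hq.div P.hasACDeriv_a ha).congr_ae ?_, ?_⟩
  · filter_upwards [hflux, ae_restrict_mem measurableSet_uIoc] with t hqt ht
    have := ha t (Set.uIoc_subset_uIcc ht)
    rw [← hqt, res, fluxDeriv]
    field_simp
    ring
  · filter_upwards [hflux, ae_restrict_mem measurableSet_uIoc] with t hqt ht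
    rw [← hqt, mul_div_cancel_left₀ _ (ha t (Set.uIoc_subset_uIcc ht))]

end IsWeakSolution

end Coeffs

namespace Mesh

variable {N : ℕ}

lemma N_pos (m : Mesh N) : 0 < N := by
  refine Nat.pos_of_ne_zero ?_
  rintro rfl
  exact zero_ne_one (m.x_zero.symm.trans m.x_last)

variable (m : Mesh N)

lemma monotoneOn : MonotoneOn m.x (Set.Iic N) := by
  refine monotoneOn_of_le_succ Set.ordConnected_Iic fun i _ _ hi => ?_
  exact (m.x_mono i (Order.succ_le_iff.1 hi)).le

lemma x_mem_uIcc {i : ℕ} (hi : i ≤ N) : m.x i ∈ Set.uIcc (0 : ℝ) 1 := by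
  rw [Set.uIcc_of_le zero_le_one, ← m.x_zero, ← m.x_last]
  exact ⟨m.monotoneOn (Nat.zero_le N) hi (Nat.zero_le i), m.monotoneOn hi Set.self_mem_Iic hi⟩

lemma uIcc_subset {i : ℕ} (hi : i < N) :
    Set.uIcc (m.x i) (m.x (i + 1)) ⊆ Set.uIcc (0 : ℝ) 1 :=
  Set.uIcc_subset_uIcc (m.x_mem_uIcc hi.le) (m.x_mem_uIcc hi)

lemma uIoc_subset {i : ℕ} (hi : i < N) :
    Set.uIoc (m.x i) (m.x (i + 1)) ⊆ Set.uIoc (0 : ℝ) 1 :=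
  Set.uIoc_subset_uIoc_of_uIcc_subset_uIcc (m.uIcc_subset hi)

lemma h_pos {i : ℕ} (hi : i < N) : 0 < m.h i := sub_pos.2 (m.x_mono i hi)

lemma sum_integral {g : ℝ → ℝ} (hg : IntervalIntegrable g volume 0 1) {j : ℕ} (hj : j ≤ N) :
    ∑ i ∈ Finset.range j, ∫ t in (m.x i)..(m.x (i + 1)), g t = ∫ t in (0 : ℝ)..(m.x j), g t := by
  rw [intervalIntegral.sum_integral_adjacent_intervals (a := m.x)
    (fun i hi => hg.mono_set (m.uIcc_subset (hi.trans_le hj))), m.x_zero]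

/-- The function with the constant value `s i` on the element of index `i`, and `0` at the
nodes. -/
def stepFun (s : ℕ → ℝ) (t : ℝ) : ℝ :=
  ∑ i ∈ Finset.range N, (Set.Ioo (m.x i) (m.x (i + 1))).indicator (fun _ => s i) t

lemma stepFun_apply (s : ℕ → ℝ) {i : ℕ} (hi : i < N) {t : ℝ}
    (ht : t ∈ Set.Ioo (m.x i) (m.x (i + 1))) : m.stepFun s t = s i := by
  have disjoint : ∀ j ∈ Finset.range N, j ≠ i → t ∉ Set.Ioo (m.x j) (m.x (j + 1)) := by
    intro j hj hji htj
    have hj : j < N := Finset.mem_range.1 hj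
    rcases lt_or_gt_of_ne hji with hlt | hlt
    · exact (m.monotoneOn hj hi.le hlt).not_gt (ht.1.trans htj.2)
    · exact (m.monotoneOn hi hj.le hlt).not_gt (htj.1.trans ht.2)
  rw [stepFun, Finset.sum_eq_single_of_mem i (Finset.mem_range.2 hi)
    fun j hj hji => Set.indicator_of_notMem (disjoint j hj hji) _, Set.indicator_of_mem ht]

lemma stepFun_ae_eq (s : ℕ → ℝ) {i : ℕ} (hi : i < N) :
    m.stepFun s =ᵐ[volume.restrict (Set.uIoc (m.x i) (m.x (i + 1)))] fun _ => s i := by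
  rw [Set.uIoc_of_le (m.x_mono i hi).le, ← restrict_Ioo_eq_restrict_Ioc]
  filter_upwards [ae_restrict_mem measurableSet_Ioo] with t ht using m.stepFun_apply s hi ht

lemma memL2_stepFun (s : ℕ → ℝ) : MemL2 (m.stepFun s) := by
  have hLp : MemLp (m.stepFun s) 2 unitMeasure :=
    memLp_finsetSum _ fun _ _ => (memLp_const _).indicator measurableSet_Ioo
  exact ⟨Finset.measurable_fun_sum _ fun _ _ => measurable_const.indicator measurableSet_Ioo,
    intervalIntegrable_iff.2 hLp.integrable_sq⟩

variable {m} in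
lemma IsPL.sub {u v : H1} (hu : m.IsPL u) (hv : m.IsPL v) : m.IsPL (u - v) := by
  intro i hi
  obtain ⟨s, hs⟩ := hu i hi
  obtain ⟨r, hr⟩ := hv i hi
  exact ⟨s - r, fun t ht => by rw [H1.sub_dval, hs t ht, hr t ht]⟩

/-- The piecewise linear interpolant of `u` at the nodes of the mesh. Its slope on each element is
the mean of `u'` there, which is what makes it agree with `u` at the nodes. -/
def interpolant (u : H1) : H1 :=
  .ofDeriv (m.stepFun fun i => ⨍ t in (m.x i)..(m.x (i + 1)), u.dval t) (m.memL2_stepFun _)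
    (u.val 0)

lemma interpolant_isPL (u : H1) : m.IsPL (m.interpolant u) :=
  fun _ hi => ⟨_, fun _ ht => m.stepFun_apply _ hi ht⟩

lemma interpolant_dval_ae_eq (u : H1) {i : ℕ} (hi : i < N) :
    (m.interpolant u).dval =ᵐ[volume.restrict (Set.uIoc (m.x i) (m.x (i + 1)))]
      fun _ => ⨍ t in (m.x i)..(m.x (i + 1)), u.dval t :=
  m.stepFun_ae_eq _ hi

lemma interpolant_val_x (u : H1) {j : ℕ} (hj : j ≤ N) :
    (m.interpolant u).val (m.x j) = u.val (m.x j) := by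
  have hx : m.x j ∈ Set.Icc (0 : ℝ) 1 := by simpa using m.x_mem_uIcc hj
  have slope_integral (i : ℕ) (hi : i ∈ Finset.range j) :
      ∫ t in (m.x i)..(m.x (i + 1)), (m.interpolant u).dval t =
        ∫ t in (m.x i)..(m.x (i + 1)), u.dval t := by
    have hi : i < N := (Finset.mem_range.1 hi).trans_le hj
    rw [intervalIntegral.integral_congr_ae_restrict (m.interpolant_dval_ae_eq u hi),
      intervalIntegral.integral_const, interval_average_eq,
      smul_inv_smul₀ (sub_pos.2 (m.x_mono i hi)).ne']
  calc (m.interpolant u).val (m.x j)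
      = u.val 0 +
          ∑ i ∈ Finset.range j, ∫ t in (m.x i)..(m.x (i + 1)), (m.interpolant u).dval t := by
        rw [(m.interpolant u).ftc _ hx, m.sum_integral (m.interpolant u).dval_int hj, interpolant,
          H1.ofDeriv_val_zero]
    _ = u.val (m.x j) := by
        rw [Finset.sum_congr rfl slope_integral, m.sum_integral u.dval_int hj, u.ftc _ hx]

lemma interpolant_val_zero (u : H1) : (m.interpolant u).val 0 = u.val 0 := by
  simpa [m.x_zero] using m.interpolant_val_x u (Nat.zero_le N)

lemma interpolant_val_one (u : H1) : (m.interpolant u).val 1 = u.val 1 := by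
  simpa [m.x_last] using m.interpolant_val_x u le_rfl

section InterpolationError

variable {u : H1} {p p' : ℝ → ℝ} (hup : u.dval =ᵐ[unitMeasure] p) (hp : HasACDeriv p p' 0 1)
  (hp' : MemLp p' 2 unitMeasure)

include hup hp hp'

lemma integral_sq_sub_interpolant_dval_le {i : ℕ} (hi : i < N) :
    ∫ t in (m.x i)..(m.x (i + 1)), (u - m.interpolant u).dval t ^ 2 ≤
      m.h i ^ 2 * ∫ t in (m.x i)..(m.x (i + 1)), p' t ^ 2 := by
  have hup_i : u.dval =ᵐ[volume.restrict (Set.uIoc (m.x i) (m.x (i + 1)))] p :=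
    ae_restrict_of_ae_restrict_of_subset (m.uIoc_subset hi) hup
  have dval_ae_eq : (fun t => (u - m.interpolant u).dval t ^ 2)
      =ᵐ[volume.restrict (Set.uIoc (m.x i) (m.x (i + 1)))]
      fun t => (p t - ⨍ r in (m.x i)..(m.x (i + 1)), p r) ^ 2 := by
    filter_upwards [hup_i, m.interpolant_dval_ae_eq u hi] with t hu hinterp
    rw [H1.sub_dval, hu, hinterp, average_congr hup_i]
  rw [intervalIntegral.integral_congr_ae_restrict dval_ae_eq]
  exact (hp.mono (m.uIcc_subset hi)).integral_sq_sub_average_le (m.x_mono i hi)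
    (hp'.mono_measure (Measure.restrict_mono (m.uIoc_subset hi) le_rfl))

lemma L2_sub_interpolant_dval_le {H : ℝ} (hH : ∀ i < N, m.h i ≤ H) :
    L2 (u - m.interpolant u).dval ≤ H * L2 p' := by
  have hH0 : 0 ≤ H := (m.h_pos m.N_pos).le.trans (hH 0 m.N_pos)
  have hp'sq : IntervalIntegrable (fun t => p' t ^ 2) volume 0 1 :=
    intervalIntegrable_iff.2 hp'.integrable_sq
  rw [← sq_le_sq₀ (L2_nonneg _) (mul_nonneg hH0 (L2_nonneg _)), mul_pow, L2_sq, L2_sq,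
    ← integral_eq_unitMeasure, ← integral_eq_unitMeasure, ← m.x_last,
    ← m.sum_integral (u - m.interpolant u).dval_sq_int le_rfl, ← m.sum_integral hp'sq le_rfl,
    Finset.mul_sum]
  refine Finset.sum_le_sum fun i hi => ?_
  have hi : i < N := Finset.mem_range.1 hi
  have integral_nonneg : 0 ≤ ∫ t in (m.x i)..(m.x (i + 1)), p' t ^ 2 :=
    intervalIntegral.integral_nonneg (m.x_mono i hi).le fun _ _ => sq_nonneg _
  have h_sq_le : m.h i ^ 2 ≤ H ^ 2 := pow_le_pow_left₀ (m.h_pos hi).le (hH i hi) 2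
  exact (m.integral_sq_sub_interpolant_dval_le hup hp hp' hi).trans
    (mul_le_mul_of_nonneg_right h_sq_le integral_nonneg)

end InterpolationError

end Mesh

lemma le_inv_mul_of_mul_sq_le_mul {α K x : ℝ} (hα : 0 < α) (hK : 0 ≤ K) (hx : 0 ≤ x)
    (h : α * x ^ 2 ≤ K * x) : x ≤ α⁻¹ * K := by
  rw [le_inv_mul_iff₀ hα]
  rcases hx.eq_or_lt with rfl | hx
  · simpa using hK
  · exact le_of_mul_le_mul_right (by linarith) hx

namespace Coeffs.IsFESolution

variable {P : Coeffs} {f : ℝ → ℝ} {u uh z : H1} {N : ℕ} {m : Mesh N}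

lemma L2_dval_le (hf : MemLp f 2 unitMeasure) (huh : P.IsFESolution f m uh) :
    L2 uh.dval ≤ P.a0⁻¹ * L2 f := by
  obtain ⟨h0, h1, hpl, hgalerkin⟩ := huh
  refine le_inv_mul_of_mul_sq_le_mul P.a0_pos (L2_nonneg f) (L2_nonneg _) ?_
  calc P.a0 * L2 uh.dval ^ 2 ≤ P.B uh uh := P.coercive h0 h1
    _ = ip f uh := hgalerkin uh h0 h1 hpl
    _ ≤ L2 f * L2 uh.dval := (le_abs_self _).trans (abs_ip_le hf h0)

lemma galerkin_orthogonality (hu : P.IsWeakSolution f u) (huh : P.IsFESolution f m uh) {v : H1}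
    (h0 : v.val 0 = 0) (h1 : v.val 1 = 0) (hv : m.IsPL v) : P.B (u - uh) v = 0 := by
  rw [B_sub_left, hu.2.2 v h0 h1, huh.2.2.2 v h0 h1 hv, sub_self]

lemma cea_inequality (hu : P.IsWeakSolution f u) (huh : P.IsFESolution f m uh)
    (hz0 : z.val 0 = 0) (hz1 : z.val 1 = 0) (hz : m.IsPL z) :
    L2 (u - uh).dval ≤ P.a0⁻¹ * (P.continuityConst * L2 (u - z).dval) := by
  have ⟨huh0, huh1, hpl, _⟩ := huh
  have orth : P.B (u - uh) (z - uh) = 0 :=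
    huh.galerkin_orthogonality hu (by simp [*]) (by simp [*]) (hz.sub hpl)
  refine le_inv_mul_of_mul_sq_le_mul P.a0_pos
    (mul_nonneg P.continuityConst_pos.le (L2_nonneg _)) (L2_nonneg _) ?_
  calc P.a0 * L2 (u - uh).dval ^ 2 ≤ P.B (u - uh) (u - uh) :=
        P.coercive (by simp [hu.1, huh0]) (by simp [hu.2.1, huh1])
    _ = P.B (u - uh) (u - z) := by
        simp only [B_sub_right] at orth ⊢
        linarith
    _ ≤ P.continuityConst * (L2 (u - uh).dval * L2 (u - z).dval) :=
        (le_abs_self _).trans (P.abs_B_le (by simp [hu.1, huh0]) (by simp [hu.1, hz0]))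
    _ = P.continuityConst * L2 (u - z).dval * L2 (u - uh).dval := by ring

lemma L2_sub_dval_le (hf : MemLp f 2 unitMeasure) (hu : P.IsWeakSolution f u)
    (huh : P.IsFESolution f m uh) {H : ℝ} (hH : ∀ i < N, m.h i ≤ H) :
    L2 (u - uh).dval ≤ P.a0⁻¹ * (P.continuityConst * (H * (P.a0⁻¹ * L2 (P.res f u)))) := by
  obtain ⟨p, hp, hup⟩ := hu.exists_hasACDeriv hf
  have ha0 := P.a0_pos
  have hM := P.continuityConst_pos
  have hH0 : 0 ≤ H := (m.h_pos m.N_pos).le.trans (hH 0 m.N_pos)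
  calc L2 (u - uh).dval ≤ P.a0⁻¹ * (P.continuityConst * L2 (u - m.interpolant u).dval) :=
        huh.cea_inequality hu ((m.interpolant_val_zero u).trans hu.1)
          ((m.interpolant_val_one u).trans hu.2.1) (m.interpolant_isPL u)
    _ ≤ P.a0⁻¹ * (P.continuityConst * (H * L2 (fun t => -P.res f u t / P.a t))) := by
        gcongr
        exact m.L2_sub_interpolant_dval_le hup hp (P.memLp_neg_res_div_a hf u) hH
    _ ≤ P.a0⁻¹ * (P.continuityConst * (H * (P.a0⁻¹ * L2 (P.res f u)))) := by
        gcongr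
        exact P.L2_neg_res_div_a_le hf u

end Coeffs.IsFESolution

theorem statement9_general (P : Coeffs) :
    (∃ C : ℝ, 0 < C ∧ ∀ f : ℝ → ℝ, MemL2 f →
      ∀ (N : ℕ) (m : Mesh N) (uh : H1), P.IsFESolution f m uh → L2 uh.dval ≤ C * L2 f) ∧
    (∃ C : ℝ, 0 < C ∧ ∀ f : ℝ → ℝ, MemL2 f → ∀ u : H1, P.IsWeakSolution f u →
      ∀ (N : ℕ) (m : Mesh N) (H : ℝ), (∀ i < N, m.h i ≤ H) →
      ∀ uh : H1, P.IsFESolution f m uh →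
        L2 (fun t => u.dval t - uh.dval t) ≤ C * H * L2 (P.res f u)) := by
  have ha0 := P.a0_pos
  have hM := P.continuityConst_pos
  refine ⟨⟨P.a0⁻¹, by positivity, fun f hf N m uh huh => huh.L2_dval_le hf.memLp⟩,
    P.a0⁻¹ * P.continuityConst * P.a0⁻¹, by positivity, fun f hf u hu N m H hH uh huh => ?_⟩
  exact (huh.L2_sub_dval_le hf.memLp hu hH).trans_eq (by ring)

/-- stability of the finite element solution and the a priori error
bound for meshes with max_i h_i ≤ C₁/N (Lemma 3.6). -/
theorem statement9 (P : Coeffs) :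
    (∃ C : ℝ, 0 < C ∧
      ∀ f : ℝ → ℝ, MemL2 f →
      ∀ (N : ℕ) (m : Mesh N) (uh : H1), P.IsFESolution f m uh →
        L2 uh.dval ≤ C * L2 f) ∧
    (∀ C₁ : ℝ, 0 < C₁ → ∃ C : ℝ, 0 < C ∧
      ∀ f : ℝ → ℝ, MemL2 f →
      ∀ u : H1, P.IsWeakSolution f u → u.IsH2 →
      ∀ (N : ℕ) (m : Mesh N), (∀ i < N, m.h i ≤ C₁ / (N:ℝ)) →
      ∀ uh : H1, P.IsFESolution f m uh →
        L2 (fun t => u.dval t - uh.dval t) ≤ C * L2 (P.res f u) / (N:ℝ)) := by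
  obtain ⟨stability, C, hC, error⟩ := statement9_general P
  exact ⟨stability, fun C₁ hC₁ => ⟨C * C₁, mul_pos hC hC₁, fun f hf u hu _ N m hm uh huh =>
    (error f hf u hu N m _ hm uh huh).trans_eq (by ring)⟩⟩

end EquidMesh
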